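/- Let K ⊂ {(x,y) ∈ ℝ² : 0 < x ≤ y} be a compact set and let E := {ξ ∈ ℝ^{2×2} : (λ₁(ξ), λ₂(ξ)) ∈ K}. Then the interior of E^{pc} satisfies int(E^{pc}) = { ξ ∈ ℝ^{2×2} : f_θ(λ₁(ξ), λ₂(ξ)) < max_{(a,b) ∈ K} f_θ(a,b) for all θ ∈ [0, max_{(a,b) ∈ K} b] }. -/

import Mathlib

open scoped BigOperators

/-- Square of the Frobenius norm of a 2×2 real matrix. -/
noncomputable def frobSq (ξ : Matrix (Fin 2) (Fin 2) ℝ) : ℝ := ∑ i, ∑ j, (ξ i j) ^ 2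

/-- The Frobenius norm of a 2×2 real matrix. -/
noncomputable def frobNorm (ξ : Matrix (Fin 2) (Fin 2) ℝ) : ℝ := Real.sqrt (frobSq ξ)

/-- The smallest singular value of a 2×2 real matrix. -/
noncomputable def lam1 (ξ : Matrix (Fin 2) (Fin 2) ℝ) : ℝ :=
  (Real.sqrt (frobSq ξ + 2 * |ξ.det|) - Real.sqrt (frobSq ξ - 2 * |ξ.det|)) / 2

/-- The largest singular value of a 2×2 real matrix. -/
noncomputable def lam2 (ξ : Matrix (Fin 2) (Fin 2) ℝ) : ℝ :=
  (Real.sqrt (frobSq ξ + 2 * |ξ.det|) + Real.sqrt (frobSq ξ - 2 * |ξ.det|)) / 2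

/-- A function on 2×2 matrices is rank one convex if it is convex along rank one segments. -/
def RankOneConvex (f : Matrix (Fin 2) (Fin 2) ℝ → ℝ) : Prop :=
  ∀ (ξ η : Matrix (Fin 2) (Fin 2) ℝ) (t : ℝ), t ∈ Set.Icc (0 : ℝ) 1 →
    (ξ - η).rank = 1 → f (t • ξ + (1 - t) • η) ≤ t * f ξ + (1 - t) * f η

/-- The rank one convex hull `E^{rc}` of a set of 2×2 matrices. -/
def rcHull (E : Set (Matrix (Fin 2) (Fin 2) ℝ)) : Set (Matrix (Fin 2) (Fin 2) ℝ) :=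
  {ξ | ∀ f : Matrix (Fin 2) (Fin 2) ℝ → ℝ,
    RankOneConvex f → (∀ η ∈ E, f η ≤ 0) → f ξ ≤ 0}

/-- The rank one convex hull `U^{rc}` of an open set of 2×2 matrices. -/
def rcHullOpen (U : Set (Matrix (Fin 2) (Fin 2) ℝ)) : Set (Matrix (Fin 2) (Fin 2) ℝ) :=
  {ξ | ∃ E : Set (Matrix (Fin 2) (Fin 2) ℝ), E ⊆ U ∧ IsCompact E ∧ ξ ∈ rcHull E}

/-- A function on 2×2 matrices is polyconvex if it is a convex function of (ξ, det ξ). -/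
def PolyconvexFun (f : Matrix (Fin 2) (Fin 2) ℝ → ℝ) : Prop :=
  ∃ g : Matrix (Fin 2) (Fin 2) ℝ × ℝ → ℝ,
    ConvexOn ℝ Set.univ g ∧ ∀ ξ, f ξ = g (ξ, ξ.det)

/-- The polyconvex hull `E^{pc}` of a set of 2×2 matrices. -/
def pcHull (E : Set (Matrix (Fin 2) (Fin 2) ℝ)) : Set (Matrix (Fin 2) (Fin 2) ℝ) :=
  {ξ | ∀ f : Matrix (Fin 2) (Fin 2) ℝ → ℝ,
    PolyconvexFun f → (∀ η ∈ E, f η ≤ 0) → f ξ ≤ 0}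

/-- The polyconvex hull `U^{pc}` of an open set of 2×2 matrices. -/
def pcHullOpen (U : Set (Matrix (Fin 2) (Fin 2) ℝ)) : Set (Matrix (Fin 2) (Fin 2) ℝ) :=
  {ξ | ∃ E : Set (Matrix (Fin 2) (Fin 2) ℝ), E ⊆ U ∧ IsCompact E ∧ ξ ∈ pcHull E}

/-- A set of 2×2 matrices is polyconvex. -/
def PolyconvexSet (A : Set (Matrix (Fin 2) (Fin 2) ℝ)) : Prop :=
  ∀ (ξ : Fin 5 → Matrix (Fin 2) (Fin 2) ℝ) (t : Fin 5 → ℝ),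
    (∀ i, ξ i ∈ A) → (∀ i, 0 ≤ t i) → (∑ i, t i) = 1 →
    (∑ i, t i * (ξ i).det) = (∑ i, t i • ξ i).det →
    (∑ i, t i • ξ i) ∈ A

/-- The polyconvex hull `Pco E`: the smallest polyconvex set containing `E`. -/
def Pco (E : Set (Matrix (Fin 2) (Fin 2) ℝ)) : Set (Matrix (Fin 2) (Fin 2) ℝ) :=
  ⋂₀ {A | PolyconvexSet A ∧ E ⊆ A}

/-- A set of 2×2 matrices is isotropic if it is invariant under orthogonal transformations. -/
def Isotropic (E : Set (Matrix (Fin 2) (Fin 2) ℝ)) : Prop :=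
  ∀ R S : Matrix (Fin 2) (Fin 2) ℝ, R * R.transpose = 1 → S * S.transpose = 1 → ∀ ξ ∈ E, R * ξ * S ∈ E

/-- The distance (w.r.t. the Frobenius norm) from a matrix to a set of matrices. -/
noncomputable def distE (ξ : Matrix (Fin 2) (Fin 2) ℝ) (E : Set (Matrix (Fin 2) (Fin 2) ℝ)) : ℝ :=
  sInf ((fun η => frobNorm (ξ - η)) '' E)

/-- The function `f_θ(x,y) = xy + θ(y-x)`. -/
def ftheta (θ : ℝ) (p : ℝ × ℝ) : ℝ := p.1 * p.2 + θ * (p.2 - p.1)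

/-- The gradient of a map `u : ℝ² → ℝ²` at `x`, as a 2×2 matrix. -/
noncomputable def gradMatrix (u : (Fin 2 → ℝ) → (Fin 2 → ℝ)) (x : Fin 2 → ℝ) :
    Matrix (Fin 2) (Fin 2) ℝ :=
  LinearMap.toMatrix' (fderiv ℝ u x).toLinearMap

/-!
Identify a matrix with the real-linear map `ζ ↦ z ζ + w ζ̄` of `ℂ`. Then `λ₁ = |‖z‖ - ‖w‖|`,
`λ₂ = ‖z‖ + ‖w‖` and `det = ‖z‖² - ‖w‖²`, so that `f_θ(λ₁, λ₂) = |det| + 2θ min(‖z‖, ‖w‖)`.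

This function lies below the polyconvex function `max(det + 2θ‖w‖, -det + 2θ‖z‖)` and coincides
with it as soon as `λ₂ ≥ θ`, while for `λ₂ < θ` the latter is at most `θ²`. Hence
`f_θ(λ₁, λ₂) ≤ max_K f_θ` on `E^{pc}`, strictly in the interior because `f_θ(λ₁, λ₂)` has no local
maximum.

Conversely, by Hahn–Banach a matrix lies in `E^{pc}` if no function `ℓ + s det`, with `ℓ` linear,
separates it from `E`. Rotating `z` and `w` independently reduces this to a two-dimensional
inequality for `α x + β y + s x y` with `|α| ≤ β`, and the parameter `θ` that settles it is the one
whose level set of `f_θ` is tangent to that of the given function.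
-/

section Topology

variable {X Y : Type*} [TopologicalSpace X] [TopologicalSpace Y]

theorem isOpen_setOf_forall_mem_lt {C : Set Y} (hC : IsCompact C) {f : X → Y → ℝ} {g : Y → ℝ}
    (hf : Continuous (Function.uncurry f)) (hg : Continuous g) :
    IsOpen {x | ∀ y ∈ C, f x y < g y} :=
  isOpen_iff_mem_nhds.2 fun _ hx => hC.eventually_forall_of_forall_eventually fun y hy =>
    (isOpen_lt hf (hg.comp continuous_snd)).mem_nhds (hx y hy)

end Topology

section Ftheta

variable {K : Set (ℝ × ℝ)} {M x y θ : ℝ}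

theorem continuous_ftheta : Continuous (Function.uncurry ftheta) := by
  unfold ftheta Function.uncurry
  fun_prop

theorem isGreatest_sSup_ftheta (hKc : IsCompact K) (hKne : K.Nonempty) (θ : ℝ) :
    IsGreatest (ftheta θ '' K) (sSup (ftheta θ '' K)) :=
  (hKc.image (continuous_ftheta.comp (Continuous.prodMk_right θ))).isGreatest_sSup
    (hKne.image _)

theorem sq_le_ftheta {p : ℝ × ℝ} (hp : 0 ≤ p.1) (hθ : 0 ≤ θ) (hθp : θ ≤ p.2) :
    θ ^ 2 ≤ ftheta θ p := by
  unfold ftheta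
  nlinarith [mul_nonneg hp (sub_nonneg.2 hθp), mul_nonneg hθ (sub_nonneg.2 hθp)]

theorem lt_of_ftheta_lt_ftheta {p : ℝ × ℝ} (hp : 0 ≤ p.1) (hpM : p.2 ≤ M) (hM : 0 ≤ M) (hx : 0 ≤ x)
    (h : ftheta M (x, y) < ftheta M p) : y < M := by
  have ftheta_eq (q : ℝ × ℝ) : ftheta M q = M ^ 2 + (q.1 + M) * (q.2 - M) := by
    unfold ftheta
    ring
  have h_nonpos : (p.1 + M) * (p.2 - M) ≤ 0 :=
    mul_nonpos_of_nonneg_of_nonpos (add_nonneg hp hM) (sub_nonpos.2 hpM)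
  rw [ftheta_eq, ftheta_eq] at h
  have h_neg : (x + M) * (y - M) < 0 := by linarith
  exact sub_neg.1 (neg_of_mul_neg_right h_neg (add_nonneg hx hM))

theorem tangent_nonneg_of_ftheta_le {a b : ℝ} (hθ : 0 ≤ θ) (hθy : θ ≤ y) (hx : 0 ≤ x) (hy : 0 < y)
    (ha : 0 ≤ a) (h : ftheta θ (x, y) ≤ ftheta θ (a, b)) :
    0 ≤ (y - θ) * (a - x) + (x + θ) * (b - y) := by
  simp only [ftheta] at h
  by_contra! hT
  have hP : 0 < (a - x) * (b - y) := by linarith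
  rcases pos_and_pos_or_neg_and_neg_of_mul_pos hP with ⟨hax, hby⟩ | ⟨hax, hby⟩
  · linarith [mul_nonneg (sub_nonneg.2 hθy) hax.le, mul_nonneg (add_nonneg hx hθ) hby.le]
  · have h_fst : 0 ≤ (x - a) * (y - θ) := mul_nonneg (by linarith) (by linarith)
    have h_snd : 0 ≤ (a + θ) * (y - b) := mul_nonneg (by linarith) (by linarith)
    have h_snd_zero : (a + θ) * (y - b) = 0 := by linarith
    have h_sum : a + θ = 0 := (mul_eq_zero.1 h_snd_zero).resolve_right (by linarith)
    obtain rfl : θ = 0 := by linarith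
    nlinarith

end Ftheta

section SupportFunction

variable {K : Set (ℝ × ℝ)} {M x y s α β : ℝ}
  (hK : K ⊆ {p : ℝ × ℝ | 0 ≤ p.1 ∧ p.1 ≤ p.2}) (hM : IsGreatest (Prod.snd '' K) M)
  (hx : 0 ≤ x) (hxy : x ≤ y) (hyM : y ≤ M)
  (hf : ∀ θ ∈ Set.Icc 0 M, ∃ p ∈ K, ftheta θ (x, y) ≤ ftheta θ p)

include hK hx hxy hyM hf in
theorem exists_mem_tangent_nonneg {g h : ℝ} (hg : 0 ≤ g) (hh : 0 < h) (hgh : g * x ≤ h * y) :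
    ∃ p ∈ K, 0 ≤ g * (p.1 - x) + h * (p.2 - y) ∧
      0 ≤ (g + h) * ((p.1 - x) * (p.2 - y)) + (x + y) * (g * (p.1 - x) + h * (p.2 - y)) := by
  have hgh_pos : 0 < g + h := by linarith
  -- for this `θ` the level set of `f_θ` through `(x, y)` is orthogonal to `(g, h)` there
  set θ := (h * y - g * x) / (g + h) with hθ_def
  have hθ_eq : (g + h) * θ = h * y - g * x := mul_div_cancel₀ _ hgh_pos.ne'
  have hθ : 0 ≤ θ := div_nonneg (by linarith) hgh_pos.le
  have hθy : θ ≤ y := by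
    rw [hθ_def, div_le_iff₀ hgh_pos]
    nlinarith [mul_nonneg hg hx, mul_nonneg hg (hx.trans hxy)]
  obtain ⟨⟨a, b⟩, hp, hfp⟩ := hf θ ⟨hθ, hθy.trans hyM⟩
  obtain ⟨ha, hab⟩ : 0 ≤ a ∧ a ≤ b := hK hp
  refine ⟨_, hp, ?_, ?_⟩
  · rcases (hx.trans hxy).eq_or_lt with rfl | hy
    · obtain rfl : x = 0 := le_antisymm hxy hx
      simpa using add_nonneg (mul_nonneg hg ha) (mul_nonneg hh.le (ha.trans hab))
    · have hT := tangent_nonneg_of_ftheta_le hθ hθy hx hy ha hfp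
      have h_scale : (x + y) * (g * (a - x) + h * (b - y)) =
          (g + h) * ((y - θ) * (a - x) + (x + θ) * (b - y)) := by
        linear_combination (a - x - (b - y)) * hθ_eq
      exact nonneg_of_mul_nonneg_right (h_scale ▸ mul_nonneg hgh_pos.le hT) (by linarith)
  · have h_diff : (g + h) * ((a - x) * (b - y)) + (x + y) * (g * (a - x) + h * (b - y)) =
        (g + h) * (ftheta θ (a, b) - ftheta θ (x, y)) := by
      simp only [ftheta]
      linear_combination (a - x - (b - y)) * hθ_eq
    exact h_diff ▸ mul_nonneg hgh_pos.le (sub_nonneg.2 hfp)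

include hK hx hxy hyM hf in
theorem exists_mem_support_le_of_nonneg (hαβ : |α| ≤ β) (hs : 0 ≤ s) (hα : 0 ≤ s * y + α) :
    ∃ p ∈ K, x * (s * y + α) + β * y ≤ p.1 * (s * p.2 + α) + β * p.2 := by
  obtain ⟨hαβ_neg, hαβ_le⟩ := abs_le.1 hαβ
  have hy : 0 ≤ y := hx.trans hxy
  rcases ((abs_nonneg α).trans hαβ).eq_or_lt with rfl | hβ
  · obtain rfl : α = 0 := by linarith
    obtain ⟨p, hp, hfp⟩ := hf 0 ⟨le_rfl, hy.trans hyM⟩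
    simp only [ftheta, zero_mul, add_zero] at hfp
    exact ⟨p, hp, by linarith [mul_le_mul_of_nonneg_left hfp hs]⟩
  · have hsx : 0 ≤ s * x := mul_nonneg hs hx
    obtain ⟨⟨a, b⟩, hp, hL, hT⟩ := exists_mem_tangent_nonneg hK hx hxy hyM hf hα
      (h := s * x + β) (by linarith) (by nlinarith)
    refine ⟨_, hp, ?_⟩
    set L := (s * y + α) * (a - x) + (s * x + β) * (b - y)
    have h_scaled : 0 ≤ (s * y + α + (s * x + β)) * (s * ((a - x) * (b - y)) + L) := by
      linarith [mul_nonneg hs hT, mul_nonneg (neg_le_iff_add_nonneg.1 hαβ_neg) hL]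
    linarith [nonneg_of_mul_nonneg_right h_scaled (by linarith)]

include hK hM hx hxy hyM hf in
theorem exists_mem_support_le_of_nonpos (hαβ : α ≤ β) (hs : s ≤ 0) (hα : 0 ≤ s * y + α) :
    ∃ p ∈ K, x * (s * y + α) + β * y ≤ p.1 * |s * p.2 + α| + β * p.2 := by
  have hsx : s * y ≤ s * x := mul_le_mul_of_nonpos_left hxy hs
  rcases le_or_gt (s * M + α) 0 with hsM | hsM
  · obtain ⟨p, hp, rfl⟩ := hM.1
    refine ⟨p, hp, ?_⟩
    have h_abs := mul_nonneg (hK hp).1 (abs_nonneg (s * p.2 + α))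
    have h_fst : x * (s * y + α) ≤ y * (-s * (p.2 - y)) :=
      mul_le_mul hxy (by linarith) hα (hx.trans hxy)
    have h_snd : y * -s * (p.2 - y) ≤ β * (p.2 - y) :=
      mul_le_mul_of_nonneg_right (by linarith) (by linarith)
    linarith
  · have hsy : s * M ≤ s * y := mul_le_mul_of_nonpos_left hyM hs
    have hβ : 0 < s * x + β := by linarith
    obtain ⟨⟨a, b⟩, hp, hL, -⟩ := exists_mem_tangent_nonneg hK hx hxy hyM hf hα hβ
      (by nlinarith)
    refine ⟨_, hp, ?_⟩
    have hbM : b ≤ M := hM.2 ⟨_, hp, rfl⟩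
    have hsb : 0 ≤ s * b + α := by linarith [mul_le_mul_of_nonpos_left hbM hs]
    rw [abs_of_nonneg hsb]
    rcases le_or_gt ((a - x) * (b - y)) 0 with hP | hP
    · linarith [mul_nonneg_of_nonpos_of_nonpos hs hP]
    rcases pos_and_pos_or_neg_and_neg_of_mul_pos hP with ⟨hax, hby⟩ | ⟨hax, hby⟩
    · linarith [mul_nonneg hsb hax.le, mul_nonneg hβ.le hby.le]
    · linarith [mul_nonpos_of_nonneg_of_nonpos hα hax.le, mul_neg_of_pos_of_neg hβ hby]

include hK hM hx hxy hyM hf in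
theorem exists_mem_support_le (hαβ : |α| ≤ β) :
    ∃ p ∈ K, x * |s * y + α| + β * y ≤ p.1 * |s * p.2 + α| + β * p.2 := by
  wlog hα : 0 ≤ s * y + α generalizing s α
  · have h_neg (t : ℝ) : |(-s) * t + -α| = |s * t + α| := by rw [← abs_neg]; ring_nf
    simpa only [h_neg] using this (s := -s) (α := -α) (by rwa [abs_neg]) (by linarith)
  rw [abs_of_nonneg hα]
  rcases le_total 0 s with hs | hs
  · obtain ⟨p, hp, h⟩ := exists_mem_support_le_of_nonneg hK hx hxy hyM hf hαβ hs hα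
    exact ⟨p, hp, h.trans (by gcongr; exacts [(hK hp).1, le_abs_self _])⟩
  · exact exists_mem_support_le_of_nonpos hK hM hx hxy hyM hf ((le_abs_self α).trans hαβ) hs hα

end SupportFunction

section ConformalCoordinates

open Complex
open scoped InnerProductSpace

/-- Conformal coordinates on real 2×2 matrices: the pair `(z, w)` is sent to the matrix, in the
basis `1, I` of `ℂ`, of the real-linear map `ζ ↦ z * ζ + w * conj ζ`. -/
noncomputable def ofComplexPair : (ℂ × ℂ) ≃ₗ[ℝ] Matrix (Fin 2) (Fin 2) ℝ where
  toFun p := !![p.1.re + p.2.re, p.2.im - p.1.im; p.1.im + p.2.im, p.1.re - p.2.re]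
  invFun ξ := (⟨(ξ 0 0 + ξ 1 1) / 2, (ξ 1 0 - ξ 0 1) / 2⟩,
    ⟨(ξ 0 0 - ξ 1 1) / 2, (ξ 1 0 + ξ 0 1) / 2⟩)
  map_add' p q := by ext i j; fin_cases i <;> fin_cases j <;> simp <;> ring
  map_smul' c p := by ext i j; fin_cases i <;> fin_cases j <;> simp <;> ring
  left_inv p := by apply Prod.ext <;> apply Complex.ext <;> simp <;> ring
  right_inv ξ := by ext i j; fin_cases i <;> fin_cases j <;> simp <;> ring

variable {θ : ℝ}

theorem continuous_ofComplexPair : Continuous ofComplexPair :=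
  ofComplexPair.toLinearMap.continuous_of_finiteDimensional

theorem continuous_ofComplexPair_symm : Continuous ofComplexPair.symm :=
  ofComplexPair.symm.toLinearMap.continuous_of_finiteDimensional

theorem det_ofComplexPair (z w : ℂ) : (ofComplexPair (z, w)).det = ‖z‖ ^ 2 - ‖w‖ ^ 2 := by
  simp only [ofComplexPair, LinearEquiv.coe_mk, LinearMap.coe_mk, AddHom.coe_mk,
    Matrix.det_fin_two, Matrix.of_apply, Matrix.cons_val', Matrix.cons_val_zero,
    Matrix.cons_val_fin_one, Matrix.cons_val_one, Complex.sq_norm, normSq_apply]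
  ring

theorem frobSq_ofComplexPair (z w : ℂ) :
    frobSq (ofComplexPair (z, w)) = 2 * (‖z‖ ^ 2 + ‖w‖ ^ 2) := by
  simp only [frobSq, ofComplexPair, LinearEquiv.coe_mk, LinearMap.coe_mk, AddHom.coe_mk,
    Matrix.of_apply, Matrix.cons_val', Matrix.cons_val_fin_one, Fin.sum_univ_two,
    Matrix.cons_val_zero, Matrix.cons_val_one, Complex.sq_norm, normSq_apply]
  ring

theorem sqrt_frobSq_add_ofComplexPair (z w : ℂ) :
    √(frobSq (ofComplexPair (z, w)) + 2 * |(ofComplexPair (z, w)).det|) = 2 * max ‖z‖ ‖w‖ := by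
  rw [frobSq_ofComplexPair, det_ofComplexPair, Real.sqrt_eq_iff_eq_sq (by positivity)
    (by positivity)]
  rcases le_total ‖z‖ ‖w‖ with h | h
  · rw [max_eq_right h, abs_of_nonpos (sub_nonpos.2 (by gcongr))]
    ring
  · rw [max_eq_left h, abs_of_nonneg (sub_nonneg.2 (by gcongr))]
    ring

theorem sqrt_frobSq_sub_ofComplexPair (z w : ℂ) :
    √(frobSq (ofComplexPair (z, w)) - 2 * |(ofComplexPair (z, w)).det|) = 2 * min ‖z‖ ‖w‖ := by
  suffices frobSq (ofComplexPair (z, w)) - 2 * |(ofComplexPair (z, w)).det| =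
      (2 * min ‖z‖ ‖w‖) ^ 2 by rw [this, Real.sqrt_sq (by positivity)]
  rw [frobSq_ofComplexPair, det_ofComplexPair]
  rcases le_total ‖z‖ ‖w‖ with h | h
  · rw [min_eq_left h, abs_of_nonpos (sub_nonpos.2 (by gcongr))]
    ring
  · rw [min_eq_right h, abs_of_nonneg (sub_nonneg.2 (by gcongr))]
    ring

theorem lam1_ofComplexPair (z w : ℂ) : lam1 (ofComplexPair (z, w)) = |‖z‖ - ‖w‖| := by
  rw [lam1, sqrt_frobSq_add_ofComplexPair, sqrt_frobSq_sub_ofComplexPair, ← mul_sub,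
    max_sub_min_eq_abs', mul_div_cancel_left₀ _ two_ne_zero]

theorem lam1_nonneg (ξ : Matrix (Fin 2) (Fin 2) ℝ) : 0 ≤ lam1 ξ := by
  obtain ⟨⟨z, w⟩, rfl⟩ := ofComplexPair.surjective ξ
  exact (abs_nonneg _).trans_eq (lam1_ofComplexPair z w).symm

theorem lam2_ofComplexPair (z w : ℂ) : lam2 (ofComplexPair (z, w)) = ‖z‖ + ‖w‖ := by
  rw [lam2, sqrt_frobSq_add_ofComplexPair, sqrt_frobSq_sub_ofComplexPair, ← mul_add,
    max_add_min, mul_div_cancel_left₀ _ two_ne_zero]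

theorem ftheta_lam_ofComplexPair (θ : ℝ) (z w : ℂ) :
    ftheta θ (lam1 (ofComplexPair (z, w)), lam2 (ofComplexPair (z, w))) =
      |‖z‖ ^ 2 - ‖w‖ ^ 2| + 2 * θ * min ‖z‖ ‖w‖ := by
  have h_prod : |‖z‖ ^ 2 - ‖w‖ ^ 2| = |‖z‖ - ‖w‖| * (‖z‖ + ‖w‖) := by
    rw [sq_sub_sq, abs_mul, abs_of_nonneg (by positivity : 0 ≤ ‖z‖ + ‖w‖), mul_comm]
  simp only [ftheta, lam1_ofComplexPair, lam2_ofComplexPair]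
  rw [h_prod, ← max_sub_min_eq_abs', ← max_add_min ‖z‖ ‖w‖]
  ring

theorem continuous_ftheta_lam :
    Continuous fun q : Matrix (Fin 2) (Fin 2) ℝ × ℝ => ftheta q.2 (lam1 q.1, lam2 q.1) := by
  have h_eq (ξ : Matrix (Fin 2) (Fin 2) ℝ) (θ : ℝ) :=
    ftheta_lam_ofComplexPair θ (ofComplexPair.symm ξ).1 (ofComplexPair.symm ξ).2
  simp only [Prod.mk.eta, LinearEquiv.apply_symm_apply] at h_eq
  simp only [h_eq]
  have := continuous_ofComplexPair_symm
  fun_prop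

theorem norm_add_ofReal_mul_exp_arg (z : ℂ) {t : ℝ} (ht : 0 ≤ t) :
    ‖z + t * exp (arg z * I)‖ = ‖z‖ + t := by
  calc ‖z + t * exp (arg z * I)‖ = ‖((‖z‖ + t : ℝ) : ℂ) * exp (arg z * I)‖ := by
        rw [ofReal_add, add_mul, norm_mul_exp_arg_mul_I]
    _ = ‖z‖ + t := by
        rw [norm_mul, norm_exp_ofReal_mul_I, mul_one, norm_real,
          Real.norm_of_nonneg (by positivity)]

open Filter Topology in
theorem exists_mem_ftheta_lam_lt {U : Set (Matrix (Fin 2) (Fin 2) ℝ)}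
    {ξ : Matrix (Fin 2) (Fin 2) ℝ} (hU : U ∈ 𝓝 ξ) (θ : ℝ) :
    ∃ η ∈ U, ftheta θ (lam1 ξ, lam2 ξ) < ftheta θ (lam1 η, lam2 η) := by
  obtain ⟨⟨z, w⟩, rfl⟩ := ofComplexPair.surjective ξ
  have exists_pos {φ : ℝ → ℂ × ℂ} (hφ : Continuous φ) (hφ0 : φ 0 = (z, w)) :
      ∃ t > 0, ofComplexPair (φ t) ∈ U := by
    have h_tendsto : Tendsto (fun t => ofComplexPair (φ t)) (𝓝[>] 0) (𝓝 (ofComplexPair (z, w))) :=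
      hφ0 ▸ ((continuous_ofComplexPair.comp hφ).tendsto 0).mono_left nhdsWithin_le_nhds
    exact ((h_tendsto.eventually_mem hU).and self_mem_nhdsWithin).exists.imp fun _ h => h.symm
  -- enlarging the larger of `‖z‖` and `‖w‖` increases `|det|` and leaves the minimum unchanged
  rcases le_total ‖w‖ ‖z‖ with h | h
  · obtain ⟨t, ht, htU⟩ := exists_pos (φ := fun t => (z + t * exp (arg z * I), w))
      (by fun_prop) (by simp)
    refine ⟨_, htU, ?_⟩
    rw [ftheta_lam_ofComplexPair, ftheta_lam_ofComplexPair, norm_add_ofReal_mul_exp_arg z ht.le,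
      min_eq_right h, min_eq_right (by linarith), abs_of_nonneg (sub_nonneg.2 (by gcongr)),
      abs_of_nonneg (sub_nonneg.2 (by gcongr; linarith))]
    gcongr
    linarith
  · obtain ⟨t, ht, htU⟩ := exists_pos (φ := fun t => (z, w + t * exp (arg w * I)))
      (by fun_prop) (by simp)
    refine ⟨_, htU, ?_⟩
    rw [ftheta_lam_ofComplexPair, ftheta_lam_ofComplexPair, norm_add_ofReal_mul_exp_arg w ht.le,
      min_eq_left h, min_eq_left (by linarith), abs_of_nonpos (sub_nonpos.2 (by gcongr)),
      abs_of_nonpos (sub_nonpos.2 (by gcongr; linarith))]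
    gcongr
    linarith

/-- The maximum of the functions `det + 2θ‖w‖` and `-det + 2θ‖z‖`: a polyconvex function above
`ξ ↦ f_θ(λ₁(ξ), λ₂(ξ))`. -/
noncomputable def fthetaMajorant (θ : ℝ) (ξ : Matrix (Fin 2) (Fin 2) ℝ) : ℝ :=
  max (ξ.det + 2 * θ * ‖(ofComplexPair.symm ξ).2‖) (-ξ.det + 2 * θ * ‖(ofComplexPair.symm ξ).1‖)

theorem fthetaMajorant_ofComplexPair (θ : ℝ) (z w : ℂ) :
    fthetaMajorant θ (ofComplexPair (z, w)) =
      max (‖z‖ ^ 2 - ‖w‖ ^ 2 + 2 * θ * ‖w‖) (-(‖z‖ ^ 2 - ‖w‖ ^ 2) + 2 * θ * ‖z‖) := by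
  rw [fthetaMajorant, LinearEquiv.symm_apply_apply, det_ofComplexPair]

theorem polyconvexFun_fthetaMajorant (hθ : 0 ≤ θ) : PolyconvexFun (fthetaMajorant θ) := by
  have h_norm (L : Matrix (Fin 2) (Fin 2) ℝ × ℝ →ₗ[ℝ] ℂ) :
      ConvexOn ℝ Set.univ fun q => 2 * θ * ‖L q‖ :=
    (convexOn_univ_norm.comp_linearMap L).smul (by positivity)
  have h_det : ConvexOn ℝ Set.univ (LinearMap.snd ℝ (Matrix (Fin 2) (Fin 2) ℝ) ℝ) :=
    LinearMap.convexOn _ convex_univ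
  have h_neg_det : ConvexOn ℝ Set.univ (-LinearMap.snd ℝ (Matrix (Fin 2) (Fin 2) ℝ) ℝ) :=
    LinearMap.convexOn _ convex_univ
  let L := ofComplexPair.symm.toLinearMap ∘ₗ LinearMap.fst ℝ (Matrix (Fin 2) (Fin 2) ℝ) ℝ
  exact ⟨_, (h_det.add (h_norm (LinearMap.snd ℝ ℂ ℂ ∘ₗ L))).sup
    (h_neg_det.add (h_norm (LinearMap.fst ℝ ℂ ℂ ∘ₗ L))), fun _ => rfl⟩

theorem ftheta_lam_le_fthetaMajorant (hθ : 0 ≤ θ) (ξ : Matrix (Fin 2) (Fin 2) ℝ) :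
    ftheta θ (lam1 ξ, lam2 ξ) ≤ fthetaMajorant θ ξ := by
  obtain ⟨⟨z, w⟩, rfl⟩ := ofComplexPair.surjective ξ
  rw [ftheta_lam_ofComplexPair, fthetaMajorant_ofComplexPair, abs_eq_max_neg, max_add]
  gcongr
  exacts [min_le_right _ _, min_le_left _ _]

theorem fthetaMajorant_le {c : ℝ} (hθc : θ ^ 2 ≤ c) {ξ : Matrix (Fin 2) (Fin 2) ℝ}
    (hξ : ftheta θ (lam1 ξ, lam2 ξ) ≤ c) : fthetaMajorant θ ξ ≤ c := by
  obtain ⟨⟨z, w⟩, rfl⟩ := ofComplexPair.surjective ξ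
  have hz := norm_nonneg z
  have hw := norm_nonneg w
  rw [ftheta_lam_ofComplexPair] at hξ
  rw [fthetaMajorant_ofComplexPair]
  rcases le_total θ (‖z‖ + ‖w‖) with h_sum | h_sum
  · refine le_trans ?_ hξ
    rcases le_total ‖z‖ ‖w‖ with h | h
    · rw [min_eq_left h, abs_of_nonpos (sub_nonpos.2 (by gcongr))]
      exact max_le (by nlinarith) le_rfl
    · rw [min_eq_right h, abs_of_nonneg (sub_nonneg.2 (by gcongr))]
      exact max_le le_rfl (by nlinarith)
  · refine le_trans (max_le ?_ ?_) hθc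
    · have : ‖z‖ ^ 2 ≤ (θ - ‖w‖) ^ 2 := by gcongr; linarith
      linarith
    · have : ‖w‖ ^ 2 ≤ (θ - ‖z‖) ^ 2 := by gcongr; linarith
      linarith

theorem exists_inner_add_inner_eq (ℓ : ℂ × ℂ →ₗ[ℝ] ℝ) :
    ∃ p q : ℂ, ∀ z w, ℓ (z, w) = ⟪p, z⟫_ℝ + ⟪q, w⟫_ℝ := by
  refine ⟨(InnerProductSpace.toDual ℝ ℂ).symm (ℓ ∘ₗ LinearMap.inl ℝ ℂ ℂ).toContinuousLinearMap,
    (InnerProductSpace.toDual ℝ ℂ).symm (ℓ ∘ₗ LinearMap.inr ℝ ℂ ℂ).toContinuousLinearMap,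
    fun z w => ?_⟩
  simp [InnerProductSpace.toDual_symm_apply, ← map_add]

theorem inner_ofReal_mul_exp_arg (p : ℂ) (t : ℝ) : ⟪p, t * exp (arg p * I)⟫_ℝ = ‖p‖ * t := by
  calc ⟪p, t * exp (arg p * I)⟫_ℝ = ⟪‖p‖ • exp (arg p * I), t • exp (arg p * I)⟫_ℝ := by
        rw [real_smul, real_smul, norm_mul_exp_arg_mul_I]
    _ = ‖p‖ * t := by
        rw [real_inner_smul_left, real_inner_smul_right, real_inner_self_eq_norm_sq,
          norm_exp_ofReal_mul_I]
        ring

end ConformalCoordinates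

section PolyconvexHull

variable {E : Set (Matrix (Fin 2) (Fin 2) ℝ)} {ξ : Matrix (Fin 2) (Fin 2) ℝ}

theorem le_of_mem_pcHull {f : Matrix (Fin 2) (Fin 2) ℝ → ℝ} (hf : PolyconvexFun f) {c : ℝ}
    (hE : ∀ η ∈ E, f η ≤ c) (hξ : ξ ∈ pcHull E) : f ξ ≤ c := by
  obtain ⟨g, hg, hfg⟩ := hf
  exact sub_nonpos.1 <| hξ (fun η => f η - c)
    ⟨_, hg.sub (concaveOn_const c convex_univ), fun η => congrArg (· - c) (hfg η)⟩
    fun η hη => sub_nonpos.2 (hE η hη)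

open scoped Matrix.Norms.Elementwise in
theorem mem_pcHull_of_forall_linear
    (h : ∀ (ℓ : Matrix (Fin 2) (Fin 2) ℝ →ₗ[ℝ] ℝ) (s : ℝ),
      ∃ η ∈ E, ℓ ξ + s * ξ.det ≤ ℓ η + s * η.det) : ξ ∈ pcHull E := by
  rintro f ⟨g, hg, hfg⟩ hE
  by_contra! hξ
  have : LocallyConvexSpace ℝ (Matrix (Fin 2) (Fin 2) ℝ) :=
    inferInstanceAs (LocallyConvexSpace ℝ (Fin 2 → Fin 2 → ℝ))
  have h_closed : IsClosed {q | g q ≤ 0} :=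
    isClosed_le (continuousOn_univ.1 (hg.continuousOn isOpen_univ)) continuous_const
  have h_convex : Convex ℝ {q | g q ≤ 0} := by simpa using hg.convex_le 0
  obtain ⟨L, u, hLu, huL⟩ := geometric_hahn_banach_closed_point (x := (ξ, ξ.det)) h_convex h_closed
    (by simpa [← hfg] using hξ)
  have h_split (η : Matrix (Fin 2) (Fin 2) ℝ) : L (η, η.det) = L (η, 0) + L (0, 1) * η.det := by
    rw [mul_comm, ← smul_eq_mul, ← map_smul, ← map_add]
    simp
  obtain ⟨η, hη, hle⟩ := h (L.toLinearMap ∘ₗ LinearMap.inl ℝ _ ℝ) (L (0, 1))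
  have hη_lt : L (η, η.det) < u := hLu _ ((hfg η).symm.trans_le (hE η hη))
  rw [h_split] at hη_lt huL
  exact (huL.trans_le hle).not_gt hη_lt

end PolyconvexHull

section SingularValueSet

open scoped InnerProductSpace

variable {K : Set (ℝ × ℝ)} {M : ℝ} {ξ : Matrix (Fin 2) (Fin 2) ℝ}

theorem exists_norms_support_le (hK : K ⊆ {p : ℝ × ℝ | 0 ≤ p.1 ∧ p.1 ≤ p.2})
    (hM : IsGreatest (Prod.snd '' K) M) {u v : ℝ} (hu : 0 ≤ u) (hv : 0 ≤ v) (huv : u + v ≤ M)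
    (hf : ∀ θ ∈ Set.Icc 0 M, ∃ p ∈ K, ftheta θ (|u - v|, u + v) ≤ ftheta θ p)
    {p q : ℝ} (hp : 0 ≤ p) (hq : 0 ≤ q) (s : ℝ) :
    ∃ U V : ℝ, 0 ≤ U ∧ 0 ≤ V ∧ (|U - V|, U + V) ∈ K ∧
      p * u + q * v + s * (u ^ 2 - v ^ 2) ≤ p * U + q * V + s * (U ^ 2 - V ^ 2) := by
  obtain ⟨⟨a, b⟩, hab, h⟩ := exists_mem_support_le hK hM (abs_nonneg (u - v))
    (abs_sub_le_iff.2 ⟨by linarith, by linarith⟩) huv hf (s := s)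
    (abs_le.2 ⟨by linarith, by linarith⟩ : |(p - q) / 2| ≤ (p + q) / 2)
  obtain ⟨ha, hab_le⟩ : 0 ≤ a ∧ a ≤ b := hK hab
  have h_le : (u - v) * (s * (u + v) + (p - q) / 2) ≤ |u - v| * |s * (u + v) + (p - q) / 2| :=
    (le_abs_self _).trans_eq (abs_mul _ _)
  -- the sign of `U - V = ±a` is the one for which `(U - V) * (s * b + α) = a * |s * b + α|`
  rcases abs_cases (s * b + (p - q) / 2) with ⟨h_abs, -⟩ | ⟨h_abs, -⟩
  all_goals simp only [h_abs] at h
  · refine ⟨(b + a) / 2, (b - a) / 2, by linarith, by linarith, ?_, by linarith⟩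
    ring_nf
    rwa [abs_of_nonneg ha]
  · refine ⟨(b - a) / 2, (b + a) / 2, by linarith, by linarith, ?_, by linarith⟩
    ring_nf
    rwa [abs_neg, abs_of_nonneg ha]

theorem mem_pcHull_of_forall_ftheta_le (hK : K ⊆ {p : ℝ × ℝ | 0 ≤ p.1 ∧ p.1 ≤ p.2})
    (hM : IsGreatest (Prod.snd '' K) M) (hξM : lam2 ξ ≤ M)
    (hf : ∀ θ ∈ Set.Icc 0 M, ∃ p ∈ K, ftheta θ (lam1 ξ, lam2 ξ) ≤ ftheta θ p) :
    ξ ∈ pcHull {ξ | (lam1 ξ, lam2 ξ) ∈ K} := by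
  obtain ⟨⟨z, w⟩, rfl⟩ := ofComplexPair.surjective ξ
  simp only [lam1_ofComplexPair, lam2_ofComplexPair] at hf hξM
  refine mem_pcHull_of_forall_linear fun ℓ s => ?_
  obtain ⟨p, q, hℓ⟩ := exists_inner_add_inner_eq (ℓ ∘ₗ ofComplexPair.toLinearMap)
  simp only [LinearMap.comp_apply, LinearEquiv.coe_coe] at hℓ
  obtain ⟨U, V, hU, hV, hUV, hle⟩ := exists_norms_support_le hK hM (norm_nonneg z) (norm_nonneg w)
    hξM hf (norm_nonneg p) (norm_nonneg q) s
  refine ⟨ofComplexPair (U * Complex.exp (p.arg * Complex.I), V * Complex.exp (q.arg * Complex.I)),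
    ?_, ?_⟩
  · simpa [lam1_ofComplexPair, lam2_ofComplexPair, Complex.norm_exp_ofReal_mul_I, abs_of_nonneg hU,
      abs_of_nonneg hV] using hUV
  · rw [hℓ, hℓ, det_ofComplexPair, det_ofComplexPair, inner_ofReal_mul_exp_arg,
      inner_ofReal_mul_exp_arg]
    have hz := real_inner_le_norm p z
    have hw := real_inner_le_norm q w
    simp only [norm_mul, Complex.norm_real, Complex.norm_exp_ofReal_mul_I, mul_one,
      Real.norm_of_nonneg hU, Real.norm_of_nonneg hV]
    linarith

theorem mem_pcHull_of_forall_ftheta_lt (hK : K ⊆ {p : ℝ × ℝ | 0 ≤ p.1 ∧ p.1 ≤ p.2})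
    (hM : IsGreatest (Prod.snd '' K) M)
    (hf : ∀ θ ∈ Set.Icc 0 M, ∃ p ∈ K, ftheta θ (lam1 ξ, lam2 ξ) < ftheta θ p) :
    ξ ∈ pcHull {ξ | (lam1 ξ, lam2 ξ) ∈ K} := by
  have hM_nonneg : 0 ≤ M := by
    obtain ⟨p, hp, rfl⟩ := hM.1
    exact (hK hp).1.trans (hK hp).2
  obtain ⟨p, hp, hfp⟩ := hf M ⟨hM_nonneg, le_rfl⟩
  have hξM : lam2 ξ < M :=
    lt_of_ftheta_lt_ftheta (hK hp).1 (hM.2 ⟨p, hp, rfl⟩) hM_nonneg (lam1_nonneg ξ) hfp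
  exact mem_pcHull_of_forall_ftheta_le hK hM hξM.le fun θ hθ =>
    (hf θ hθ).imp fun _ h => ⟨h.1, h.2.le⟩

theorem ftheta_lam_le_of_mem_pcHull {θ c : ℝ} (hθ : 0 ≤ θ) (hθc : θ ^ 2 ≤ c)
    (hKθ : ∀ p ∈ K, ftheta θ p ≤ c) (hξ : ξ ∈ pcHull {ξ | (lam1 ξ, lam2 ξ) ∈ K}) :
    ftheta θ (lam1 ξ, lam2 ξ) ≤ c :=
  (ftheta_lam_le_fthetaMajorant hθ ξ).trans <|
    le_of_mem_pcHull (polyconvexFun_fthetaMajorant hθ)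
      (fun _ hη => fthetaMajorant_le hθc (hKθ _ hη)) hξ

end SingularValueSet

theorem interior_pcHull_characterization_general (K : Set (ℝ × ℝ)) (hKc : IsCompact K)
    (hKne : K.Nonempty) (hKsub : K ⊆ {p : ℝ × ℝ | 0 ≤ p.1 ∧ p.1 ≤ p.2}) :
    interior (pcHull {ξ | (lam1 ξ, lam2 ξ) ∈ K}) =
      {ξ | ∀ θ ∈ Set.Icc (0 : ℝ) (sSup (Prod.snd '' K)),
        ftheta θ (lam1 ξ, lam2 ξ) < sSup (ftheta θ '' K)} := by
  set M := sSup (Prod.snd '' K)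
  have hM : IsGreatest (Prod.snd '' K) M :=
    (hKc.image continuous_snd).isGreatest_sSup (hKne.image _)
  have hS (θ : ℝ) := isGreatest_sSup_ftheta hKc hKne θ
  have hKS {θ : ℝ} {p : ℝ × ℝ} (hp : p ∈ K) := (hS θ).2 (Set.mem_image_of_mem _ hp)
  refine Set.Subset.antisymm (fun ξ hξ θ hθ => ?_) (interior_maximal (fun ξ hξ => ?_) ?_)
  · obtain ⟨η, hη, hlt⟩ := exists_mem_ftheta_lam_lt (mem_interior_iff_mem_nhds.1 hξ) θ
    obtain ⟨p, hp, hpM⟩ := hM.1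
    have hθS := (sq_le_ftheta (hKsub hp).1 hθ.1 (hθ.2.trans_eq hpM.symm)).trans (hKS hp)
    exact hlt.trans_le (ftheta_lam_le_of_mem_pcHull hθ.1 hθS (fun _ => hKS) hη)
  · have hf (θ : ℝ) (hθ : θ ∈ Set.Icc 0 M) :
        ∃ p ∈ K, ftheta θ (lam1 ξ, lam2 ξ) < ftheta θ p := by
      obtain ⟨p, hp, hpS⟩ := (hS θ).1
      exact ⟨p, hp, hpS ▸ hξ θ hθ⟩
    exact mem_pcHull_of_forall_ftheta_lt hKsub hM hf
  · exact isOpen_setOf_forall_mem_lt isCompact_Icc continuous_ftheta_lam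
      (hKc.continuous_sSup continuous_ftheta)

/-- characterization of `int E^{pc}` via the functions `f_θ`. -/
theorem interior_pcHull_characterization (K : Set (ℝ × ℝ)) (hKc : IsCompact K)
    (hKne : K.Nonempty)
    (hKsub : K ⊆ {p : ℝ × ℝ | 0 < p.1 ∧ p.1 ≤ p.2})
    (E : Set (Matrix (Fin 2) (Fin 2) ℝ)) (hE : E = {ξ | (lam1 ξ, lam2 ξ) ∈ K}) :
    interior (pcHull E) = {ξ | ∀ θ ∈ Set.Icc (0 : ℝ) (sSup (Prod.snd '' K)),
      ftheta θ (lam1 ξ, lam2 ξ) < sSup (ftheta θ '' K)} := by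
  subst hE
  exact interior_pcHull_characterization_general K hKc hKne
    fun p hp => ⟨(hKsub hp).1.le, (hKsub hp).2⟩
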